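/- Let p > 3 be a prime. Then ∑_{k=1}^{(p-1)/2} H_{p+1-2k}/k ≡ q_p(2)^2 - 4·q_p(2) + 4p·q_p(2) + 2p·q_p(2)^2 - p·q_p(2)^3 - (13/8)·p·B_{p-3} modulo p^2 (as rational numbers). -/

import Mathlib

/-- Two rationals `a` and `b` are congruent modulo `p^r`:
the `p`-adic valuation of `a - b` is at least `r`, i.e. `a - b = c * p^r`
with the denominator of `c` not divisible by `p`. -/
def ratCongr (p r : ℕ) (a b : ℚ) : Prop :=
  ∃ c : ℚ, a - b = c * (p : ℚ) ^ r ∧ ¬ (p ∣ c.den)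

/-- The Fermat quotient `q_p(2) = (2^(p-1) - 1)/p` (an integer for odd primes),
viewed as a rational number. -/
def fermatQ (p : ℕ) : ℚ := ((2 : ℚ) ^ (p - 1) - 1) / p

/-!
Write `P_m(k) = ∑_{j ≤ k} j^m`. Reflecting `j ↦ p - j` in `H_{p+1-2k}` turns the sum, modulo `p^2`,
into `∑_{k ≤ (p-1)/2} (P_{-1}(2k-2) + p P_{-2}(2k-2)) / k`.
Here `P_m(2k-2) = P_m(2k-1) - (2k-1)^m`, and `∑_k f(2k) / k = ∑_{i < p} (1 + (-1)^i) f(i) / i`, so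
up to single sums everything reduces to the plain and the alternating sum of `P_m(i-1) / i` for
`m = -1` and `m = -2`. The plain ones come from symmetric functions and from Faulhaber's formula,
and the alternating one for `m = -2` from the symmetry `i ↦ p - i`.

The alternating sum `A` for `m = -1` is obtained from binomial coefficients. By
`C(t, k) / t = (-1)^(k-1) ∏_{j<k} (1 - t/j) / k`, the sum `∑_{0<k<p} C(t, k) / t` has a second-order
expansion in `t` whose linear coefficient is `A`. For `t = p` and `t = 2p` it also has a closed form
in `q_p(2)` and `C(2p-1, p-1)`; four times the first minus the second eliminates the quadratic
coefficient. The remaining input `H_{(p-1)/2}` modulo `p^3` comes from taking logarithms in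
`2^(p-1) ∏_{j ≤ (p-1)/2} (1 - p/(2j)) = ∏_{j ≤ (p-1)/2} (1 - p/j)`.
-/

open Finset

local notation "ℤ_(" p ")" => Valuation.integer (Rat.padicValuation p)

section Integrality

variable {p : ℕ} [Fact p.Prime] {x : ℚ}

lemma mem_integer_iff_not_dvd_den : x ∈ ℤ_(p) ↔ ¬p ∣ x.den :=
  Rat.padicValuation_le_one_iff

lemma mem_integer_of_den_dvd_six_pow (hp3 : 3 < p) (k : ℕ) (h : x.den ∣ 6 ^ k) : x ∈ ℤ_(p) := by
  refine mem_integer_iff_not_dvd_den.2 fun hpx => ?_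
  have hp : p.Prime := Fact.out
  have hp6 : p ∣ 2 * 3 := hp.dvd_of_dvd_pow (hpx.trans h)
  rcases hp.dvd_mul.1 hp6 with h2 | h3
  · exact absurd (Nat.le_of_dvd two_pos h2) (by omega)
  · exact absurd (Nat.le_of_dvd three_pos h3) (by omega)

lemma padicValuation_natCast_eq_one {k : ℕ} (hk0 : 0 < k) (hk : k < p) :
    Rat.padicValuation p k = 1 := by
  rw [← Int.cast_natCast, Rat.padicValuation_cast, Int.padicValuation_eq_one_iff]
  exact_mod_cast Nat.not_dvd_of_pos_of_lt hk0 hk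

lemma zpow_mem_integer {a : ℚ} (ha : Rat.padicValuation p a = 1) (m : ℤ) : a ^ m ∈ ℤ_(p) := by
  simp [Valuation.mem_integer_iff, ha]

lemma natCast_add_one_zpow_mem_integer {k : ℕ} (hk : k + 1 < p) (m : ℤ) :
    ((k : ℚ) + 1) ^ m ∈ ℤ_(p) :=
  mod_cast zpow_mem_integer (padicValuation_natCast_eq_one k.succ_pos hk) m

lemma two_zpow_mem_integer (hp3 : 3 < p) (m : ℤ) : (2 : ℚ) ^ m ∈ ℤ_(p) :=
  mod_cast zpow_mem_integer (padicValuation_natCast_eq_one two_pos (by omega)) m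

lemma div_natCast_add_one_mem_integer (hx : x ∈ ℤ_(p)) {k : ℕ} (hk : k + 1 < p) :
    x / (k + 1) ∈ ℤ_(p) := by
  rw [div_eq_mul_inv, ← zpow_neg_one]
  exact mul_mem hx (natCast_add_one_zpow_mem_integer hk _)

lemma div_two_mem_integer (hp3 : 3 < p) (hx : x ∈ ℤ_(p)) : x / 2 ∈ ℤ_(p) := by
  have := div_natCast_add_one_mem_integer hx (k := 1) (by omega)
  norm_num at this
  exact this

end Integrality

namespace ratCongr

variable {p r s : ℕ} {a b c d x : ℚ}

lemma of_sub_eq (h : ratCongr p r a b) (h' : c - d = a - b) : ratCongr p r c d := by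
  rwa [ratCongr, h']

variable [hp : Fact p.Prime]

lemma iff_exists_mem_integer : ratCongr p r a b ↔ ∃ x ∈ ℤ_(p), a - b = x * (p : ℚ) ^ r := by
  simp only [ratCongr, mem_integer_iff_not_dvd_den, and_comm]

lemma of_sub_eq_mul (hx : x ∈ ℤ_(p)) (h : a - b = x * (p : ℚ) ^ r) : ratCongr p r a b :=
  iff_exists_mem_integer.2 ⟨x, hx, h⟩

lemma of_eq (h : a = b) : ratCongr p r a b :=
  of_sub_eq_mul (zero_mem _) (by rw [h]; ring)

lemma refl (a : ℚ) : ratCongr p r a a := of_eq rfl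

lemma add (h : ratCongr p r a b) (h' : ratCongr p r c d) : ratCongr p r (a + c) (b + d) := by
  obtain ⟨x, hx, hab⟩ := iff_exists_mem_integer.1 h
  obtain ⟨y, hy, hcd⟩ := iff_exists_mem_integer.1 h'
  exact of_sub_eq_mul (add_mem hx hy) (by linear_combination hab + hcd)

lemma const_mul (hc : c ∈ ℤ_(p)) (h : ratCongr p r a b) : ratCongr p r (c * a) (c * b) := by
  obtain ⟨x, hx, hab⟩ := iff_exists_mem_integer.1 h
  exact of_sub_eq_mul (mul_mem hc hx) (by linear_combination c * hab)

lemma neg (h : ratCongr p r a b) : ratCongr p r (-a) (-b) :=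
  (h.const_mul (neg_mem (one_mem _))).of_sub_eq (by ring)

lemma symm (h : ratCongr p r a b) : ratCongr p r b a :=
  h.neg.of_sub_eq (by ring)

lemma sub (h : ratCongr p r a b) (h' : ratCongr p r c d) : ratCongr p r (a - c) (b - d) :=
  (h.add h'.neg).of_sub_eq (by ring)

lemma trans (h : ratCongr p r a b) (h' : ratCongr p r b c) : ratCongr p r a c :=
  (h.add h').of_sub_eq (by ring)

lemma mul (ha : a ∈ ℤ_(p)) (hd : d ∈ ℤ_(p)) (h : ratCongr p r a b) (h' : ratCongr p r c d) :
    ratCongr p r (a * c) (b * d) :=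
  ((h'.const_mul ha).add (h.const_mul hd)).of_sub_eq (by ring)

lemma sum {ι : Type*} {t : Finset ι} {f g : ι → ℚ} (h : ∀ i ∈ t, ratCongr p r (f i) (g i)) :
    ratCongr p r (∑ i ∈ t, f i) (∑ i ∈ t, g i) :=
  (sum_induction (fun i => f i - g i) (ratCongr p r · 0)
    (fun _ _ hx hy => (hx.add hy).of_sub_eq (by ring)) (refl 0)
    fun i hi => (h i hi).of_sub_eq (by ring)).of_sub_eq (by rw [sum_sub_distrib]; ring)

lemma mono (hsr : s ≤ r) (h : ratCongr p r a b) : ratCongr p s a b := by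
  obtain ⟨x, hx, hab⟩ := iff_exists_mem_integer.1 h
  refine of_sub_eq_mul (mul_mem hx (pow_mem (natCast_mem _ p) (r - s))) ?_
  rw [hab, mul_assoc, ← pow_add, Nat.sub_add_cancel hsr]

lemma pow_mul_iff : ratCongr p (s + r) ((p : ℚ) ^ s * a) ((p : ℚ) ^ s * b) ↔ ratCongr p r a b := by
  have hp0 : (p : ℚ) ^ s ≠ 0 := pow_ne_zero _ (mod_cast hp.out.ne_zero)
  simp only [iff_exists_mem_integer, ← mul_sub, pow_add, mul_left_comm _ ((p : ℚ) ^ s),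
    mul_right_inj' hp0]

lemma pow_mul_zero (hx : x ∈ ℤ_(p)) : ratCongr p r ((p : ℚ) ^ r * x) 0 :=
  of_sub_eq_mul hx (by ring)

lemma natCast_self : ratCongr p 1 p 0 :=
  of_sub_eq_mul (one_mem _) (by ring)

lemma mem_integer (h : ratCongr p r a b) (hb : b ∈ ℤ_(p)) : a ∈ ℤ_(p) := by
  obtain ⟨x, hx, hab⟩ := iff_exists_mem_integer.1 h
  rw [eq_add_of_sub_eq hab]
  exact add_mem (mul_mem hx (pow_mem (natCast_mem _ p) r)) hb

end ratCongr

/-- The power sum `∑_{j=1}^N j^m` with an integer exponent `m`, so that `powerSum (-r) N` is the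
generalized harmonic number `H_N^{(r)}`. -/
def powerSum (m : ℤ) (N : ℕ) : ℚ := ∑ k ∈ range N, ((k : ℚ) + 1) ^ m

/-- The nested sum `∑_{k=1}^N ε^k / k * ∑_{j=1}^{k-1} j^m`, used with `ε = 1` and `ε = -1`. -/
def nestedSum (ε : ℚ) (m : ℤ) (N : ℕ) : ℚ :=
  ∑ k ∈ range N, ε ^ (k + 1) * powerSum m k / (k + 1)

/-- The product `∏_{j=1}^k (1 - t / j)`, which is `(-1)^k` times the binomial coefficient
`C(t - 1, k)`. -/
def prodOneSubDiv (t : ℚ) (k : ℕ) : ℚ := ∏ j ∈ range k, (1 - t / ((j : ℚ) + 1))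

section ExactIdentities

lemma powerSum_zero (m : ℤ) : powerSum m 0 = 0 := rfl

lemma powerSum_succ (m : ℤ) (N : ℕ) : powerSum m (N + 1) = powerSum m N + ((N : ℚ) + 1) ^ m :=
  sum_range_succ _ _

lemma harmonic_eq_powerSum (N : ℕ) : harmonic N = powerSum (-1) N := by
  simp [harmonic, powerSum]

lemma nestedSum_zero (ε : ℚ) (m : ℤ) : nestedSum ε m 0 = 0 := rfl

lemma nestedSum_succ (ε : ℚ) (m : ℤ) (N : ℕ) :
    nestedSum ε m (N + 1) = nestedSum ε m N + ε ^ (N + 1) * powerSum m N / (N + 1) :=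
  sum_range_succ _ _

lemma two_mul_nestedSum_one_neg_one (N : ℕ) :
    2 * nestedSum 1 (-1) N = powerSum (-1) N ^ 2 - powerSum (-2) N := by
  induction N with
  | zero => simp [nestedSum_zero, powerSum_zero]
  | succ N ih =>
    have : (N : ℚ) + 1 ≠ 0 := by positivity
    simp only [nestedSum_succ, powerSum_succ, mul_add, ih, zpow_neg, zpow_ofNat]
    field_simp
    ring

lemma prodOneSubDiv_succ (t : ℚ) (k : ℕ) :
    prodOneSubDiv t (k + 1) = prodOneSubDiv t k * (1 - t / ((k : ℚ) + 1)) :=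
  prod_range_succ _ _

lemma sum_range_two_mul (f : ℕ → ℚ) (n : ℕ) :
    ∑ i ∈ range (2 * n), f i = ∑ i ∈ range n, (f (2 * i) + f (2 * i + 1)) := by
  induction n with
  | zero => rfl
  | succ n ih => rw [mul_add, sum_range_succ, sum_range_succ, ih, sum_range_succ, add_assoc]

lemma sum_even_zpow (m : ℤ) (n : ℕ) :
    ∑ k ∈ range n, (((2 * k + 1 : ℕ) : ℚ) + 1) ^ m = 2 ^ m * powerSum m n := by
  rw [powerSum, mul_sum]
  refine sum_congr rfl fun k _ => ?_
  rw [← mul_zpow]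
  push_cast
  ring_nf

lemma sum_odd_zpow (m : ℤ) (n : ℕ) :
    ∑ k ∈ range n, (2 * (k : ℚ) + 1) ^ m = powerSum m (2 * n) - 2 ^ m * powerSum m n := by
  rw [← sum_even_zpow, powerSum, sum_range_two_mul, ← sum_sub_distrib]
  refine sum_congr rfl fun k _ => ?_
  push_cast
  ring

lemma sum_alternating_zpow (m : ℤ) (n : ℕ) :
    ∑ k ∈ range (2 * n), (-1) ^ (k + 1) * ((k : ℚ) + 1) ^ m =
      2 * 2 ^ m * powerSum m n - powerSum m (2 * n) := by
  rw [sum_range_two_mul, mul_assoc, ← sum_even_zpow, powerSum, sum_range_two_mul, mul_sum,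
    ← sum_sub_distrib]
  refine sum_congr rfl fun k _ => ?_
  simp only [pow_succ, pow_mul]
  ring

lemma sum_powerSum_even_index (m : ℤ) (n : ℕ) :
    ∑ k ∈ range n, powerSum m (2 * k) / (k + 1) =
      nestedSum 1 m (2 * n) + nestedSum (-1) m (2 * n) -
        ∑ k ∈ range n, (2 * (k : ℚ) + 1) ^ m / (k + 1) := by
  rw [nestedSum, nestedSum, ← sum_add_distrib, sum_range_two_mul, ← sum_sub_distrib]
  refine sum_congr rfl fun k _ => ?_
  have : (k : ℚ) + 1 ≠ 0 := by positivity
  simp only [pow_succ, pow_mul, powerSum_succ]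
  push_cast
  field_simp
  ring

lemma sum_odd_zpow_div (m : ℤ) (n : ℕ) :
    ∑ k ∈ range n, (2 * (k : ℚ) + 1) ^ m / (k + 1) =
      2 * (powerSum m (2 * n) - 2 ^ m * powerSum m n) -
        ∑ k ∈ range n, (2 * (k : ℚ) + 1) ^ (m + 1) / (k + 1) := by
  rw [← sum_odd_zpow, mul_sum, ← sum_sub_distrib]
  refine sum_congr rfl fun k _ => ?_
  rw [zpow_add_one₀ (by positivity)]
  field_simp
  ring

lemma sum_odd_zpow_neg_one_div (n : ℕ) :
    ∑ k ∈ range n, (2 * (k : ℚ) + 1) ^ (-1 : ℤ) / (k + 1) =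
      2 * powerSum (-1) (2 * n) - 2 * powerSum (-1) n := by
  rw [sum_odd_zpow_div, neg_add_cancel]
  simp only [zpow_neg_one, zpow_zero, powerSum, one_div]
  ring

lemma sum_odd_zpow_neg_two_div (n : ℕ) :
    ∑ k ∈ range n, (2 * (k : ℚ) + 1) ^ (-2 : ℤ) / (k + 1) =
      2 * powerSum (-2) (2 * n) - powerSum (-2) n / 2 - 2 * powerSum (-1) (2 * n) +
        2 * powerSum (-1) n := by
  rw [sum_odd_zpow_div, show (-2 + 1 : ℤ) = -1 by rfl, sum_odd_zpow_neg_one_div]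
  norm_num
  ring

lemma sum_harmonic_sub_two_mul_div {p n : ℕ} (hn : p = 2 * n + 1) :
    ∑ k ∈ Icc 1 ((p - 1) / 2), harmonic (p + 1 - 2 * k) / k =
      ∑ k ∈ range n, powerSum (-1) (2 * n - 2 * k) / (k + 1) := by
  rw [show (p - 1) / 2 = n by omega, ← Ico_add_one_right_eq_Icc, sum_Ico_eq_sum_range,
    Nat.add_sub_cancel]
  refine sum_congr rfl fun k _ => ?_
  rw [harmonic_eq_powerSum, show p + 1 - 2 * (1 + k) = 2 * n - 2 * k by omega, add_comm 1 k]
  push_cast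
  rfl

end ExactIdentities

section PowerSums

variable {p : ℕ} [hp : Fact p.Prime] {n N : ℕ}

lemma add_natCast_zpow_congr {a : ℚ} (ha : Rat.padicValuation p a = 1) (m : ℤ) :
    ratCongr p 2 ((a + p) ^ m) (a ^ m + m * a ^ (m - 1) * p) := by
  have hap : Rat.padicValuation p (a + p) = 1 := by
    rw [Valuation.map_add_eq_of_lt_left, ha]
    rw [ha, Rat.padicValuation_self]
    decide
  have ha0 : a ≠ 0 := fun h => by simp [h] at ha
  have hap0 : a + p ≠ 0 := fun h => by simp [h] at hap
  have mul_add_congr (l : ℤ) : ratCongr p 2 ((a + p) * (a ^ l + l * a ^ (l - 1) * p))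
      (a ^ (l + 1) + (l + 1 : ℤ) * a ^ (l + 1 - 1) * p) := by
    refine ratCongr.of_sub_eq_mul (mul_mem (intCast_mem _ l) (zpow_mem_integer ha (l - 1))) ?_
    rw [zpow_add_one₀ ha0, add_sub_cancel_right, zpow_sub_one₀ ha0]
    push_cast
    field_simp
    ring
  induction m with
  | zero => exact ratCongr.of_eq (by simp)
  | succ m ih =>
    rw [zpow_add_one₀ hap0, mul_comm]
    exact (ih.const_mul (by simpa using zpow_mem_integer hap 1)).trans (mul_add_congr m)
  | pred m ih =>
    have h := (ih.trans (by simpa using (mul_add_congr (-m - 1)).symm)).const_mul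
      (zpow_mem_integer hap (-1))
    rw [zpow_neg_one, inv_mul_cancel_left₀ hap0] at h
    rw [zpow_sub_one₀ hap0, mul_comm]
    exact_mod_cast h

lemma natCast_zpow_congr_of_add_eq {i k : ℕ} (hi : 0 < i) (hk : 0 < k) (h : i + k = p) (m : ℤ) :
    ratCongr p 2 ((k : ℚ) ^ m) ((-1) ^ m * ((i : ℚ) ^ m - m * p * (i : ℚ) ^ (m - 1))) := by
  have hval : Rat.padicValuation p (-i) = 1 := by
    rw [Valuation.map_neg, padicValuation_natCast_eq_one hi (by omega)]
  have hk_eq : (k : ℚ) = -i + p := by rw [← h]; push_cast; ring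
  rw [hk_eq]
  refine (add_natCast_zpow_congr hval m).of_sub_eq ?_
  rw [neg_eq_neg_one_mul (i : ℚ), mul_zpow, mul_zpow, zpow_sub_one₀ (by norm_num : (-1 : ℚ) ≠ 0)]
  ring

lemma powerSum_mem_integer (hN : N < p) (m : ℤ) : powerSum m N ∈ ℤ_(p) :=
  sum_mem fun k hk => natCast_add_one_zpow_mem_integer (by have := mem_range.1 hk; omega) m

lemma powerSum_reflect (hN : p = N + 1) (m : ℤ) {j k : ℕ} (h : j + k = N) :
    ratCongr p 2 (powerSum m k)
      (powerSum m N - (-1) ^ m * (powerSum m j - m * p * powerSum (m - 1) j)) := by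
  induction j generalizing k with
  | zero => exact ratCongr.of_eq (by simp [powerSum_zero, ← h])
  | succ j ih =>
    have hterm := natCast_zpow_congr_of_add_eq (p := p) (i := j + 1) j.succ_pos k.succ_pos
      (by omega) m
    have hsucc := (ih (k := k + 1) (by omega)).sub hterm
    push_cast at hsucc
    refine (ratCongr.of_eq ?_).trans (hsucc.trans (ratCongr.of_eq ?_))
    · rw [powerSum_succ]; ring
    · rw [powerSum_succ, powerSum_succ]; ring

lemma powerSum_even_half_congr (hn : p = 2 * n + 1) {m : ℤ} (hm : Even m) :
    ratCongr p 2 (2 * powerSum m n) (powerSum m (2 * n) + m * p * powerSum (m - 1) n) := by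
  refine (powerSum_reflect hn m (two_mul n).symm).of_sub_eq ?_
  rw [hm.neg_one_zpow]
  ring

lemma powerSum_odd_congr_zero (hp3 : 3 < p) (hN : p = N + 1) {m : ℤ} (hm : Odd m) :
    ratCongr p 1 (powerSum m N) 0 := by
  have hreflect := (powerSum_reflect hN m (add_zero N)).mono one_le_two
  rw [hm.neg_one_zpow, powerSum_zero] at hreflect
  have hsmall : ratCongr p 1 (p ^ 1 * (m * powerSum (m - 1) N)) 0 :=
    ratCongr.pow_mul_zero (mul_mem (intCast_mem _ m) (powerSum_mem_integer (by omega) _))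
  have htwice : ratCongr p 1 (2 * powerSum m N) 0 :=
    (hreflect.symm.add hsmall).of_sub_eq (by ring)
  exact (htwice.const_mul (div_two_mem_integer hp3 (one_mem _))).of_sub_eq (by ring)

lemma sum_odd_zpow_congr (hn : p = 2 * n + 1) (m : ℤ) :
    ratCongr p 2 (∑ k ∈ range n, (2 * (k : ℚ) + 1) ^ m)
      ((-1) ^ m * (2 ^ m * powerSum m n - m * p * 2 ^ (m - 1) * powerSum (m - 1) n)) := by
  rw [← sum_range_reflect, mul_assoc _ (2 ^ (m - 1)), ← sum_even_zpow, ← sum_even_zpow, mul_sum,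
    ← sum_sub_distrib, mul_sum]
  refine ratCongr.sum fun k hk => ?_
  have hk := mem_range.1 hk
  convert natCast_zpow_congr_of_add_eq (p := p) (i := 2 * k + 2) (k := 2 * (n - 1 - k) + 1)
    (by omega) (by omega) (by omega) m using 2
  · push_cast; rfl
  · push_cast; ring_nf

/-- Summing `i^m` over all `0 < i < p`, once paired as `i, p - i` and once split by parity. -/
lemma two_zpow_sub_one_mul_powerSum_congr (hp3 : 3 < p) (hn : p = 2 * n + 1) {m : ℤ}
    (hm : Even m) :
    ratCongr p 2 ((2 ^ m - 1) * powerSum m (2 * n))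
      (-(m * p * 2 ^ (m - 1) * powerSum (m - 1) n)) := by
  have hpair := (powerSum_even_half_congr hn hm).const_mul (two_zpow_mem_integer hp3 m)
  have hodd := sum_odd_zpow_congr hn m
  rw [sum_odd_zpow, hm.neg_one_zpow] at hodd
  have h2 : (2 : ℚ) ^ m = 2 * 2 ^ (m - 1) := by rw [← zpow_one_add₀ two_ne_zero]; ring_nf
  refine (hpair.neg.sub hodd).of_sub_eq ?_
  rw [h2]
  ring

end PowerSums

section Bernoulli

variable {p : ℕ} [hp : Fact p.Prime] {N : ℕ}

lemma bernoulli'_mem_integer {m : ℕ} (hm : m + 1 < p) : bernoulli' m ∈ ℤ_(p) := by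
  induction m using Nat.strong_induction_on with
  | _ m ih =>
    rw [bernoulli'_def]
    refine sub_mem (one_mem _) (sum_mem fun k hk => ?_)
    have hk := mem_range.1 hk
    rw [mul_comm, ← mul_div_assoc, ← Nat.cast_sub hk.le]
    exact div_natCast_add_one_mem_integer (mul_mem (ih k hk (by omega)) (natCast_mem _ _))
      (by omega)

lemma bernoulli_mem_integer {m : ℕ} (hm : m + 1 < p) : bernoulli m ∈ ℤ_(p) :=
  mul_mem (pow_mem (neg_mem (one_mem _)) _) (bernoulli'_mem_integer hm)

/-- The coefficient of `x^(m - i)` in Faulhaber's polynomial `x⁻¹ * ∑_{j < x} j^m`. -/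
def faulhaberCoeff (m i : ℕ) : ℚ := bernoulli i * (m + 1).choose i / (m + 1)

lemma faulhaberCoeff_mem_integer {m i : ℕ} (hi : i ≤ m) (hm : m + 1 < p) :
    faulhaberCoeff m i ∈ ℤ_(p) :=
  div_natCast_add_one_mem_integer
    (mul_mem (bernoulli_mem_integer (by omega)) (natCast_mem _ _)) hm

lemma powerSum_div_add_one {m : ℕ} (hm : m ≠ 0) (k : ℕ) :
    powerSum m k / (k + 1) =
      bernoulli m + ∑ i ∈ range m, faulhaberCoeff m i * ((k : ℚ) + 1) ^ (m - i) := by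
  have hk : (k : ℚ) + 1 ≠ 0 := by positivity
  have hm1 : (m : ℚ) + 1 ≠ 0 := by positivity
  have hsum : powerSum m k = ∑ j ∈ range (k + 1), (j : ℚ) ^ m := by
    simp [sum_range_succ', powerSum, hm]
  rw [hsum, sum_range_pow, sum_range_succ, add_comm, add_div, sum_div]
  congr 1
  · rw [Nat.choose_succ_self_right, Nat.add_sub_cancel_left]
    push_cast
    field_simp
  · refine sum_congr rfl fun i hi => ?_
    rw [Nat.sub_add_comm (mem_range.1 hi).le, pow_succ, faulhaberCoeff]
    push_cast
    field_simp

lemma powerSum_congr_mul_bernoulli (hN : p = N + 1) {m : ℕ} (hm0 : m ≠ 0) (hm : m + 1 < p) :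
    ratCongr p 2 (powerSum m N) (p * bernoulli m) := by
  have hpN : (N : ℚ) + 1 = p := by rw [hN]; push_cast; rfl
  have hfaulhaber := powerSum_div_add_one hm0 N
  rw [hpN, div_eq_iff (mod_cast hp.out.ne_zero)] at hfaulhaber
  have hhigher : ∑ i ∈ range m, faulhaberCoeff m i * (p : ℚ) ^ (m - i - 1) ∈ ℤ_(p) :=
    sum_mem fun i hi => mul_mem (faulhaberCoeff_mem_integer (mem_range.1 hi).le hm)
      (pow_mem (natCast_mem _ p) _)
  refine ratCongr.of_sub_eq_mul hhigher ?_
  rw [hfaulhaber, add_mul, mul_comm (bernoulli m), add_sub_cancel_left, sum_mul, sum_mul]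
  refine sum_congr rfl fun i hi => ?_
  rw [← Nat.sub_add_cancel (Nat.sub_pos_of_lt (mem_range.1 hi)), pow_succ]
  simp only [Nat.add_sub_cancel]
  ring

lemma powerSum_congr_zero (hN : p = N + 1) {m : ℕ} (hm0 : m ≠ 0) (hm : m + 1 < p) :
    ratCongr p 1 (powerSum m N) 0 :=
  ((powerSum_congr_mul_bernoulli hN hm0 hm).mono one_le_two).trans
    (by simpa using ratCongr.pow_mul_zero (r := 1) (bernoulli_mem_integer (p := p) hm))

lemma nestedSum_one_congr_neg_bernoulli (hN : p = N + 1) {m : ℕ} (hm0 : m ≠ 0)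
    (hm : m + 1 < p) : ratCongr p 1 (nestedSum 1 m N) (-bernoulli m) := by
  have hexpand : nestedSum 1 m N =
      N * bernoulli m + ∑ i ∈ range m, faulhaberCoeff m i * powerSum (m - i : ℕ) N := by
    simp only [nestedSum, one_pow, one_mul, powerSum_div_add_one hm0, sum_add_distrib, sum_const,
      card_range, nsmul_eq_mul]
    rw [sum_comm]
    simp only [powerSum, zpow_natCast, mul_sum]
  have hhigher : ratCongr p 1 (∑ i ∈ range m, faulhaberCoeff m i * powerSum (m - i : ℕ) N)
      0 := by
    rw [← sum_const_zero (s := range m)]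
    refine ratCongr.sum fun i hi => ?_
    have hi := mem_range.1 hi
    simpa using (powerSum_congr_zero hN (m := m - i) (by omega) (by omega)).const_mul
      (faulhaberCoeff_mem_integer hi.le hm)
  have hmain : ratCongr p 1 (p ^ 1 * bernoulli m) 0 :=
    ratCongr.pow_mul_zero (bernoulli_mem_integer hm)
  rw [hexpand]
  refine (hmain.add hhigher).of_sub_eq ?_
  rw [hN]
  push_cast
  ring

end Bernoulli

section Fermat

variable {p : ℕ} [hp : Fact p.Prime] {N : ℕ}

lemma natCast_pow_sub_one_congr_one {i : ℕ} (hi0 : 0 < i) (hi : i < p) :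
    ratCongr p 1 ((i : ℚ) ^ (p - 1)) 1 := by
  have h := Int.ModEq.pow_card_sub_one_eq_one hp.out (n := (i : ℤ))
    (Nat.isCoprime_iff_coprime.2 (Nat.coprime_of_lt_prime hi0.ne' hi hp.out).symm)
  obtain ⟨c, hc⟩ := h.symm.dvd
  exact ratCongr.of_sub_eq_mul (intCast_mem _ c) (by rw [pow_one, mul_comm]; exact_mod_cast hc)

lemma powerSum_add_congr (hN : N < p) (m : ℤ) :
    ratCongr p 1 (powerSum (m + (p - 1 : ℕ)) N) (powerSum m N) := by
  refine ratCongr.sum fun k hk => ?_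
  have hk : k + 1 < p := by have := mem_range.1 hk; omega
  have h := (natCast_pow_sub_one_congr_one k.succ_pos hk).const_mul
    (natCast_add_one_zpow_mem_integer hk m)
  rw [zpow_add₀ (by positivity), zpow_natCast]
  simpa using h

lemma nestedSum_add_congr (hN : N < p) (m : ℤ) :
    ratCongr p 1 (nestedSum 1 (m + (p - 1 : ℕ)) N) (nestedSum 1 m N) := by
  refine ratCongr.sum fun k hk => ?_
  have hk : k + 1 < p := by have := mem_range.1 hk; omega
  have h := (powerSum_add_congr (p := p) (N := k) (by omega) m).const_mul
    (natCast_add_one_zpow_mem_integer hk (-1))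
  exact h.of_sub_eq (by rw [zpow_neg_one]; ring)

lemma two_pow_eq_one_add_mul_fermatQ : (2 : ℚ) ^ (p - 1) = 1 + p * fermatQ p := by
  rw [fermatQ, mul_div_cancel₀ _ (mod_cast hp.out.ne_zero), add_sub_cancel]

lemma fermatQ_mem_integer (hp3 : 3 < p) : fermatQ p ∈ ℤ_(p) := by
  have h : ratCongr p 1 (2 ^ (p - 1)) 1 :=
    mod_cast natCast_pow_sub_one_congr_one two_pos (by omega)
  rw [two_pow_eq_one_add_mul_fermatQ] at h
  have h' : ratCongr p (1 + 0) (p ^ 1 * fermatQ p) (p ^ 1 * 0) := h.of_sub_eq (by ring)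
  exact (ratCongr.pow_mul_iff.1 h').mem_integer (zero_mem _)

end Fermat

section Wolstenholme

variable {p : ℕ} [hp : Fact p.Prime] {n N : ℕ}

lemma two_pow_sub_one_mul_bernoulli_congr (hp3 : 3 < p) (hn : p = 2 * n + 1) {m : ℕ} (hm0 : m ≠ 0)
    (hm : m + 1 < p) (hm2 : Even m) :
    ratCongr p 1 ((2 ^ m - 1) * bernoulli m) (-(m * 2 ^ m / 2 * powerSum (m - 1) n)) := by
  have hparity := two_zpow_sub_one_mul_powerSum_congr hp3 hn ((Int.even_coe_nat m).2 hm2)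
  have hbernoulli := (powerSum_congr_mul_bernoulli hn hm0 hm).const_mul (c := 2 ^ m - 1)
    (sub_mem (pow_mem (ofNat_mem _ 2) m) (one_mem _))
  rw [zpow_sub_one₀ two_ne_zero, zpow_natCast] at hparity
  refine (ratCongr.pow_mul_iff (s := 1)).1
    ((ratCongr.of_eq ?_).trans (hbernoulli.symm.trans (hparity.trans (ratCongr.of_eq ?_))))
  · ring
  · push_cast
    ring

lemma bernoulli_sub_three_mem_integer (hp3 : 3 < p) : bernoulli (p - 3) ∈ ℤ_(p) :=
  bernoulli_mem_integer (by omega)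

lemma powerSum_neg_three_half_congr (hp3 : 3 < p) (hn : p = 2 * n + 1) :
    ratCongr p 1 (powerSum (-3) n) (-2 * bernoulli (p - 3)) := by
  have hfermat : ratCongr p 1 (powerSum ((p - 3 : ℕ) - 1) n) (powerSum (-3) n) := by
    have h := powerSum_add_congr (p := p) (N := n) (by omega) (-3)
    rwa [show (-3 : ℤ) + (p - 1 : ℕ) = (p - 3 : ℕ) - 1 by omega] at h
  have hP := powerSum_mem_integer (p := p) (N := n) (by omega) ((p - 3 : ℕ) - 1)
  have hB := bernoulli_sub_three_mem_integer hp3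
  have hq := fermatQ_mem_integer hp3
  have h := two_pow_sub_one_mul_bernoulli_congr hp3 hn (m := p - 3) (by omega) (by omega)
    (by rw [Nat.even_iff]; omega)
  rw [Nat.cast_sub hp3.le,
    show (2 : ℚ) ^ (p - 3) = (1 + p * fermatQ p) / 4 by
      rw [← two_pow_eq_one_add_mul_fermatQ, show p - 1 = p - 3 + 2 by omega, pow_add]; ring] at h
  generalize powerSum ((p - 3 : ℕ) - 1) n = P at *
  generalize bernoulli (p - 3) = B at *
  generalize fermatQ p = q at *
  have h83 : (8 / 3 : ℚ) ∈ ℤ_(p) := mem_integer_of_den_dvd_six_pow hp3 1 (by norm_num)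
  have h13 : (1 / 3 : ℚ) ∈ ℤ_(p) := mem_integer_of_den_dvd_six_pow hp3 1 (by norm_num)
  have hsmall : ratCongr p 1 (p ^ 1 * (q * P - 1 / 3 * (1 + p * q) * P - 1 / 3 * (2 * q * B))) 0 :=
    ratCongr.pow_mul_zero (by aesop)
  refine hfermat.symm.trans (((h.const_mul h83).symm.sub hsmall).of_sub_eq ?_)
  push_cast
  ring

lemma powerSum_neg_two_congr (hp3 : 3 < p) (hn : p = 2 * n + 1) :
    ratCongr p 2 (powerSum (-2) (2 * n)) (2 / 3 * p * bernoulli (p - 3)) := by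
  have hcube : ratCongr p 2 (p ^ 1 * powerSum (-3) n) (p ^ 1 * (-2 * bernoulli (p - 3))) :=
    ratCongr.pow_mul_iff.2 (powerSum_neg_three_half_congr hp3 hn)
  have h := two_zpow_sub_one_mul_powerSum_congr hp3 hn (m := -2) (by decide)
  have h43 : (-(4 / 3) : ℚ) ∈ ℤ_(p) := mem_integer_of_den_dvd_six_pow hp3 1 (by norm_num)
  have h13 : (-(1 / 3) : ℚ) ∈ ℤ_(p) := mem_integer_of_den_dvd_six_pow hp3 1 (by norm_num)
  exact ((h.const_mul h43).add (hcube.const_mul h13)).of_sub_eq (by norm_num; ring)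

lemma powerSum_neg_two_half_congr (hp3 : 3 < p) (hn : p = 2 * n + 1) :
    ratCongr p 2 (powerSum (-2) n) (7 / 3 * p * bernoulli (p - 3)) := by
  have hcube : ratCongr p 2 (p ^ 1 * powerSum (-3) n) (p ^ 1 * (-2 * bernoulli (p - 3))) :=
    ratCongr.pow_mul_iff.2 (powerSum_neg_three_half_congr hp3 hn)
  have h := powerSum_even_half_congr hn (m := -2) (by decide)
  have h12 : (1 / 2 : ℚ) ∈ ℤ_(p) := div_two_mem_integer hp3 (one_mem _)
  exact (((h.add (powerSum_neg_two_congr hp3 hn)).const_mul h12).sub hcube).of_sub_eq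
    (by norm_num; ring)

lemma inv_add_inv_congr_of_add_eq {i k : ℕ} (hi : 0 < i) (hk : 0 < k) (h : i + k = p) :
    ratCongr p 3 ((i : ℚ) ^ (-1 : ℤ) + (k : ℚ) ^ (-1 : ℤ))
      (-(p * (i : ℚ) ^ (-2 : ℤ)) - p ^ 2 * (i : ℚ) ^ (-3 : ℤ)) := by
  have hinv := (natCast_zpow_congr_of_add_eq hi hk h (-1)).const_mul
    (zpow_mem_integer (padicValuation_natCast_eq_one hi (by omega)) (-1))
  refine (ratCongr.of_eq ?_).trans
    (((ratCongr.pow_mul_iff (s := 1)).2 hinv).trans (ratCongr.of_eq ?_))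
  · rw [← h]
    push_cast
    field_simp
    ring
  · norm_num [zpow_neg, zpow_ofNat]
    field_simp
    ring

lemma two_mul_powerSum_neg_one_congr (hN : p = N + 1) :
    ratCongr p 3 (2 * powerSum (-1) N)
      (-(p * powerSum (-2) N) - p ^ 2 * powerSum (-3) N) := by
  have hpair : 2 * powerSum (-1) N =
      ∑ k ∈ range N, (((k + 1 : ℕ) : ℚ) ^ (-1 : ℤ) + ((N - 1 - k + 1 : ℕ) : ℚ) ^ (-1 : ℤ)) := by
    rw [sum_add_distrib, sum_range_reflect (fun k : ℕ => ((k + 1 : ℕ) : ℚ) ^ (-1 : ℤ)), ← two_mul]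
    push_cast
    rfl
  rw [hpair, powerSum, powerSum, mul_sum, mul_sum, ← sum_neg_distrib, ← sum_sub_distrib]
  refine ratCongr.sum fun k hk => ?_
  have hk := mem_range.1 hk
  exact_mod_cast inv_add_inv_congr_of_add_eq (p := p) k.succ_pos (N - 1 - k).succ_pos (by omega)

lemma powerSum_neg_one_congr (hp3 : 3 < p) (hn : p = 2 * n + 1) :
    ratCongr p 3 (powerSum (-1) (2 * n)) (-(1 / 3 * p ^ 2 * bernoulli (p - 3))) := by
  have hsquare : ratCongr p 3 (p ^ 1 * powerSum (-2) (2 * n))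
      (p ^ 1 * (2 / 3 * p * bernoulli (p - 3))) :=
    ratCongr.pow_mul_iff.2 (powerSum_neg_two_congr hp3 hn)
  have hcube : ratCongr p 3 (p ^ 2 * powerSum (-3) (2 * n)) (p ^ 2 * 0) :=
    ratCongr.pow_mul_iff.2 (powerSum_odd_congr_zero hp3 hn (by decide))
  have h12 : (1 / 2 : ℚ) ∈ ℤ_(p) := div_two_mem_integer hp3 (one_mem _)
  exact (((two_mul_powerSum_neg_one_congr hn).sub (hsquare.add hcube)).const_mul h12).of_sub_eq
    (by ring)

lemma powerSum_neg_one_congr_zero (hp3 : 3 < p) (hn : p = 2 * n + 1) :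
    ratCongr p 2 (powerSum (-1) (2 * n)) 0 := by
  have hint : -(1 / 3) * bernoulli (p - 3) ∈ ℤ_(p) :=
    mul_mem (mem_integer_of_den_dvd_six_pow hp3 1 (by norm_num))
      (bernoulli_sub_three_mem_integer hp3)
  exact ((powerSum_neg_one_congr hp3 hn).mono (by norm_num)).trans
    ((ratCongr.pow_mul_zero hint).of_sub_eq (by ring))

lemma powerSum_neg_two_congr_zero (hp3 : 3 < p) (hn : p = 2 * n + 1) :
    ratCongr p 1 (powerSum (-2) (2 * n)) 0 := by
  have hint : 2 / 3 * bernoulli (p - 3) ∈ ℤ_(p) :=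
    mul_mem (mem_integer_of_den_dvd_six_pow hp3 1 (by norm_num))
      (bernoulli_sub_three_mem_integer hp3)
  exact ((powerSum_neg_two_congr hp3 hn).mono one_le_two).trans
    ((ratCongr.pow_mul_zero (r := 1) hint).of_sub_eq (by ring))

lemma powerSum_neg_two_half_congr_zero (hp3 : 3 < p) (hn : p = 2 * n + 1) :
    ratCongr p 1 (powerSum (-2) n) 0 := by
  have hint : 7 / 3 * bernoulli (p - 3) ∈ ℤ_(p) :=
    mul_mem (mem_integer_of_den_dvd_six_pow hp3 1 (by norm_num))
      (bernoulli_sub_three_mem_integer hp3)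
  exact ((powerSum_neg_two_half_congr hp3 hn).mono one_le_two).trans
    ((ratCongr.pow_mul_zero (r := 1) hint).of_sub_eq (by ring))

end Wolstenholme

/-- The logarithm series of `u` at `1` truncated after the cubic term; it is additive on products
of rationals congruent to `1` modulo `p`, up to a multiple of `p^4`. -/
def truncLog (u : ℚ) : ℚ := (u - 1) - (u - 1) ^ 2 / 2 + (u - 1) ^ 3 / 3

section Products

variable {p : ℕ} [hp : Fact p.Prime] {k : ℕ} {t u v : ℚ}

lemma ratCongr.exists_eq_add_pow_mul {r : ℕ} (h : ratCongr p r u v) :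
    ∃ c ∈ ℤ_(p), u = v + (p : ℚ) ^ r * c := by
  obtain ⟨c, hc, huv⟩ := ratCongr.iff_exists_mem_integer.1 h
  exact ⟨c, hc, by linear_combination huv⟩

lemma truncLog_mul_congr (hp3 : 3 < p) (hu : ratCongr p 1 u 1) (hv : ratCongr p 1 v 1) :
    ratCongr p 4 (truncLog (u * v)) (truncLog u + truncLog v) := by
  obtain ⟨a, ha, rfl⟩ := hu.exists_eq_add_pow_mul
  obtain ⟨b, hb, rfl⟩ := hv.exists_eq_add_pow_mul
  have h12 : (1 / 2 : ℚ) ∈ ℤ_(p) := div_two_mem_integer hp3 (one_mem _)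
  have h13 : (1 / 3 : ℚ) ∈ ℤ_(p) := mem_integer_of_den_dvd_six_pow hp3 1 (by norm_num)
  have herror : (a + b) ^ 2 * (a * b) - 1 / 2 * (a * b) ^ 2 + p * ((a + b) * (a * b) ^ 2) +
      1 / 3 * (p ^ 2 * (a * b) ^ 3) ∈ ℤ_(p) := by aesop
  refine ratCongr.of_sub_eq_mul herror ?_
  simp only [truncLog]
  ring

lemma truncLog_congr_sub_one (hp3 : 3 < p) (hu : ratCongr p 3 u 1) :
    ratCongr p 4 (truncLog u) (u - 1) := by
  obtain ⟨c, hc, rfl⟩ := hu.exists_eq_add_pow_mul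
  have h12 : (1 / 2 : ℚ) ∈ ℤ_(p) := div_two_mem_integer hp3 (one_mem _)
  have h13 : (1 / 3 : ℚ) ∈ ℤ_(p) := mem_integer_of_den_dvd_six_pow hp3 1 (by norm_num)
  have herror : 1 / 3 * p ^ 5 * c ^ 3 - 1 / 2 * p ^ 2 * c ^ 2 ∈ ℤ_(p) := by aesop
  refine ratCongr.of_sub_eq_mul herror ?_
  simp only [truncLog]
  ring

lemma nestedSum_mem_integer {ε : ℚ} (hε : ε ∈ ℤ_(p)) (m : ℤ) (hk : k < p) :
    nestedSum ε m k ∈ ℤ_(p) :=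
  sum_mem fun j hj => by
    have hj := mem_range.1 hj
    exact div_natCast_add_one_mem_integer
      (mul_mem (pow_mem hε _) (powerSum_mem_integer (by omega) m)) (by omega)

lemma one_sub_div_congr_one (ht : ratCongr p 1 t 0) (hk : k + 1 < p) :
    ratCongr p 1 (1 - t / (k + 1)) 1 :=
  (ht.const_mul (natCast_add_one_zpow_mem_integer hk (-1))).neg.of_sub_eq
    (by rw [zpow_neg_one]; ring)

lemma prodOneSubDiv_congr_one (ht : ratCongr p 1 t 0) (hk : k < p) :
    ratCongr p 1 (prodOneSubDiv t k) 1 := by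
  induction k with
  | zero => exact ratCongr.refl 1
  | succ k ih =>
    have hfactor := one_sub_div_congr_one ht hk
    have hih := ih (by omega)
    rw [prodOneSubDiv_succ]
    simpa using hih.mul (hih.mem_integer (one_mem _)) (one_mem _) hfactor

lemma prodOneSubDiv_congr (ht : ratCongr p 1 t 0) (hk : k < p) :
    ratCongr p 3 (prodOneSubDiv t k)
      (1 - t * powerSum (-1) k + t ^ 2 * nestedSum 1 (-1) k) := by
  induction k with
  | zero => exact ratCongr.of_eq (by simp [prodOneSubDiv, powerSum_zero, nestedSum_zero])
  | succ k ih =>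
    have hfactor := (one_sub_div_congr_one ht hk).mem_integer (one_mem _)
    have hcube : ratCongr p 3 (t ^ 3 * (nestedSum 1 (-1) k / (k + 1))) 0 := by
      obtain ⟨c, hc, rfl⟩ := ht.exists_eq_add_pow_mul
      have hint := mul_mem (pow_mem hc 3)
        (div_natCast_add_one_mem_integer
          (nestedSum_mem_integer (one_mem _) (-1) (Nat.lt_of_succ_lt hk)) hk)
      exact (ratCongr.pow_mul_zero hint).of_sub_eq (by ring)
    rw [prodOneSubDiv_succ]
    refine (((ih (by omega)).const_mul hfactor).sub hcube).of_sub_eq ?_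
    simp only [powerSum_succ, nestedSum_succ, zpow_neg_one, one_pow]
    ring

lemma truncLog_prodOneSubDiv_congr (hp3 : 3 < p) (ht : ratCongr p 1 t 0) (hk : k < p) :
    ratCongr p 4 (truncLog (prodOneSubDiv t k))
      (-(t * powerSum (-1) k) - t ^ 2 / 2 * powerSum (-2) k - t ^ 3 / 3 * powerSum (-3) k) := by
  induction k with
  | zero => exact ratCongr.of_eq (by simp [truncLog, prodOneSubDiv, powerSum_zero])
  | succ k ih =>
    have hmul := truncLog_mul_congr hp3 (prodOneSubDiv_congr_one ht (Nat.lt_of_succ_lt hk))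
      (one_sub_div_congr_one ht hk)
    rw [prodOneSubDiv_succ]
    refine hmul.trans ((ih (by omega)).of_sub_eq ?_)
    simp only [truncLog, powerSum_succ, zpow_neg, zpow_ofNat, ← inv_pow]
    ring

end Products

section Binomials

lemma natCast_choose_eq_prodOneSubDiv (N k : ℕ) :
    (N.choose k : ℚ) = (-1) ^ k * prodOneSubDiv (N + 1) k := by
  induction k with
  | zero => simp [prodOneSubDiv]
  | succ k ih =>
    have hsucc : (N.choose (k + 1) : ℚ) * (k + 1) = N.choose k * (N - k) := by
      rcases le_or_gt k N with hk | hk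
      · rw [← Nat.cast_sub hk]
        exact_mod_cast Nat.choose_succ_right_eq N k
      · simp [Nat.choose_eq_zero_of_lt hk, Nat.choose_eq_zero_of_lt (hk.trans k.lt_succ_self)]
    rw [prodOneSubDiv_succ, eq_div_of_mul_eq (by positivity) hsucc, ih]
    field_simp
    ring

lemma sum_choose_succ (T N : ℕ) :
    ∑ k ∈ range N, ((T + 1).choose (k + 1) : ℚ) =
      (T + 1) * ∑ k ∈ range N, (-1) ^ k * prodOneSubDiv (T + 1) k / (k + 1) := by
  rw [mul_sum]
  refine sum_congr rfl fun k _ => ?_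
  rw [← natCast_choose_eq_prodOneSubDiv, ← mul_div_assoc, eq_div_iff (by positivity)]
  exact_mod_cast (Nat.add_one_mul_choose_eq T k).symm

lemma sum_choose_succ_self (N : ℕ) :
    ∑ k ∈ range N, ((N + 1).choose (k + 1) : ℚ) = 2 * 2 ^ N - 2 := by
  have h : ∑ k ∈ range (N + 2), ((N + 1).choose k : ℚ) = 2 ^ (N + 1) :=
    mod_cast Nat.sum_range_choose (N + 1)
  rw [sum_range_succ, sum_range_succ', Nat.choose_self, Nat.choose_zero_right, pow_succ] at h
  push_cast at h
  linear_combination h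

lemma sum_choose_succ_two_mul (N : ℕ) :
    ∑ k ∈ range N, ((2 * N + 2).choose (k + 1) : ℚ) =
      2 * 4 ^ N - 1 - (2 * N + 1).choose N := by
  have hhalf : ∑ k ∈ range (N + 1), ((2 * N + 1).choose k : ℚ) = 4 ^ N :=
    mod_cast Nat.sum_range_choose_halfway N
  have hhalf_succ := hhalf
  rw [sum_range_succ] at hhalf
  rw [sum_range_succ', Nat.choose_zero_right] at hhalf_succ
  simp only [Nat.choose_succ_succ _ (_ : ℕ), Nat.cast_add, sum_add_distrib] at hhalf_succ ⊢
  push_cast at hhalf_succ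
  linear_combination hhalf + hhalf_succ

lemma centralBinom_eq_prod (n : ℕ) :
    (n.centralBinom : ℚ) = ∏ j ∈ range n, (2 * (2 * (j : ℚ) + 1) / (j + 1)) := by
  induction n with
  | zero => simp
  | succ n ih =>
    rw [prod_range_succ, ← ih, ← mul_div_assoc, eq_div_iff (by positivity)]
    have h := Nat.succ_mul_centralBinom_succ n
    rw [mul_comm, mul_comm (n.centralBinom : ℚ)]
    exact_mod_cast h

lemma four_pow_mul_prodOneSubDiv_half (n : ℕ) :
    4 ^ n * prodOneSubDiv ((2 * n + 1) / 2) n = prodOneSubDiv (2 * n + 1) n := by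
  have hbinom := natCast_choose_eq_prodOneSubDiv (2 * n) n
  rw [← Nat.centralBinom_eq_two_mul_choose, centralBinom_eq_prod, prod_div_distrib,
    ← prod_range_reflect, ← prod_div_distrib] at hbinom
  push_cast at hbinom
  have hreflect : 4 ^ n * prodOneSubDiv ((2 * n + 1) / 2) n =
      (-1) ^ n * ∏ j ∈ range n, 2 * (2 * ((n - 1 - j : ℕ) : ℚ) + 1) / (j + 1) := by
    have hconst (c : ℚ) (f : ℕ → ℚ) : c ^ n * ∏ j ∈ range n, f j = ∏ j ∈ range n, c * f j := by
      rw [prod_mul_distrib, prod_const, card_range]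
    rw [prodOneSubDiv, hconst, hconst]
    refine prod_congr rfl fun j hj => ?_
    have hj := mem_range.1 hj
    rw [Nat.sub_sub, Nat.cast_sub (by omega)]
    push_cast
    field_simp
    ring
  rw [hreflect, hbinom, ← mul_assoc, ← mul_pow]
  norm_num

end Binomials

section Quotients

variable {p : ℕ} [hp : Fact p.Prime] {n : ℕ}

lemma truncLog_two_pow : truncLog (2 ^ (p - 1)) =
    p * fermatQ p - p ^ 2 * fermatQ p ^ 2 / 2 + p ^ 3 * fermatQ p ^ 3 / 3 := by
  rw [two_pow_eq_one_add_mul_fermatQ, truncLog]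
  ring

lemma powerSum_neg_one_half_congr (hp3 : 3 < p) (hn : p = 2 * n + 1) :
    ratCongr p 3 (powerSum (-1) n)
      (-2 * fermatQ p + p * fermatQ p ^ 2 - 2 / 3 * p ^ 2 * fermatQ p ^ 3 -
        7 / 12 * p ^ 2 * bernoulli (p - 3)) := by
  have hpn : (2 * n + 1 : ℚ) = p := by rw [hn]; push_cast; rfl
  have hp2 : ratCongr p 1 (p / 2) 0 :=
    (ratCongr.natCast_self.const_mul (div_two_mem_integer hp3 (one_mem _))).of_sub_eq (by ring)
  have hpow : ratCongr p 1 (2 ^ (p - 1)) 1 := by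
    rw [two_pow_eq_one_add_mul_fermatQ]
    exact (ratCongr.pow_mul_zero (r := 1) (fermatQ_mem_integer hp3)).of_sub_eq (by ring)
  have hdup : 2 ^ (p - 1) * prodOneSubDiv (p / 2) n = prodOneSubDiv p n := by
    rw [← hpn, ← four_pow_mul_prodOneSubDiv_half, show p - 1 = 2 * n by omega, pow_mul]
    norm_num
  have hlog := truncLog_mul_congr hp3 hpow (prodOneSubDiv_congr_one hp2 (k := n) (by omega))
  rw [hdup, truncLog_two_pow] at hlog
  have hsq := (ratCongr.pow_mul_iff (s := 2)).2 (powerSum_neg_two_half_congr hp3 hn)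
  have hcube := (ratCongr.pow_mul_iff (s := 3)).2 (powerSum_neg_three_half_congr hp3 hn)
  have h34 : (3 / 4 : ℚ) ∈ ℤ_(p) := mem_integer_of_den_dvd_six_pow hp3 2 (by norm_num)
  have h712 : (7 / 12 : ℚ) ∈ ℤ_(p) := mem_integer_of_den_dvd_six_pow hp3 2 (by norm_num)
  have hlog_p := truncLog_prodOneSubDiv_congr hp3 ratCongr.natCast_self (k := n) (by omega)
  have hlog_half := truncLog_prodOneSubDiv_congr hp3 hp2 (k := n) (by omega)
  refine (ratCongr.pow_mul_iff (s := 1)).1 ?_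
  refine ((((hlog_p.symm.trans (hlog.trans ((ratCongr.refl _).add hlog_half))).const_mul
    (neg_mem (ofNat_mem _ 2))).sub (hsq.const_mul h34)).sub (hcube.const_mul h712)).of_sub_eq ?_
  ring

end Quotients

section NestedSums

variable {p : ℕ} [hp : Fact p.Prime] {n N : ℕ}

lemma nestedSum_one_neg_one_congr (hp3 : 3 < p) (hn : p = 2 * n + 1) :
    ratCongr p 2 (nestedSum 1 (-1) (2 * n)) (-(1 / 3 * p * bernoulli (p - 3))) := by
  have hP := powerSum_mem_integer (p := p) (N := 2 * n) (by omega) (-1)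
  have h12 : (1 / 2 : ℚ) ∈ ℤ_(p) := div_two_mem_integer hp3 (one_mem _)
  refine ((((powerSum_neg_one_congr_zero hp3 hn).const_mul hP).sub
    (powerSum_neg_two_congr hp3 hn)).const_mul h12).of_sub_eq ?_
  linear_combination 1 / 2 * two_mul_nestedSum_one_neg_one (2 * n)

lemma nestedSum_one_neg_two_congr (hp3 : 3 < p) (hn : p = 2 * n + 1) :
    ratCongr p 1 (nestedSum 1 (-2) (2 * n)) (-bernoulli (p - 3)) := by
  have hfermat := nestedSum_add_congr (p := p) (N := 2 * n) (by omega) (-2)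
  rw [show (-2 : ℤ) + (p - 1 : ℕ) = (p - 3 : ℕ) by omega] at hfermat
  exact hfermat.symm.trans (nestedSum_one_congr_neg_bernoulli hn (by omega) (by omega))

lemma inv_congr_neg_inv_of_add_eq {i k : ℕ} (hi : 0 < i) (hk : 0 < k) (h : i + k = p) :
    ratCongr p 1 (k : ℚ)⁻¹ (-(i : ℚ)⁻¹) := by
  have hint := mul_mem (zpow_mem_integer (padicValuation_natCast_eq_one hi (by omega)) (-1))
    (zpow_mem_integer (padicValuation_natCast_eq_one hk (by omega : k < p)) (-1))
  refine ratCongr.of_sub_eq_mul hint ?_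
  rw [zpow_neg_one, zpow_neg_one, ← h]
  push_cast
  field_simp
  ring

lemma powerSum_even_reflect (hN : p = N + 1) {m : ℤ} (hm : Even m)
    (hP : ratCongr p 1 (powerSum m N) 0) {j k : ℕ} (h : j + k = N) :
    ratCongr p 1 (powerSum m k) (-powerSum m j) := by
  have hreflect := (powerSum_reflect hN m h).mono one_le_two
  have hsmall : ratCongr p 1 (p ^ 1 * (m * powerSum (m - 1) j)) 0 :=
    ratCongr.pow_mul_zero (mul_mem (intCast_mem _ m) (powerSum_mem_integer (by omega) _))
  rw [hm.neg_one_zpow] at hreflect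
  exact hreflect.trans ((hP.add hsmall).of_sub_eq (by ring))

/-- Pairing `k` with `p - k` turns the inner sum into its complement. -/
lemma two_mul_nestedSum_neg_one_congr (hp3 : 3 < p) (hn : p = 2 * n + 1) {m : ℤ} (hm : Even m)
    (hP : ratCongr p 1 (powerSum m (2 * n)) 0) :
    ratCongr p 1 (2 * nestedSum (-1) m (2 * n)) (-(2 ^ m * powerSum (m - 1) n)) := by
  have hreflect : ratCongr p 1 (nestedSum (-1) m (2 * n))
      (∑ k ∈ range (2 * n), -((-1) ^ (k + 1) * (powerSum m k + ((k : ℚ) + 1) ^ m) / (k + 1))) := by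
    rw [nestedSum, ← sum_range_reflect]
    refine ratCongr.sum fun k hk => ?_
    have hk := mem_range.1 hk
    have hsum := powerSum_even_reflect hn hm hP (j := k + 1) (k := 2 * n - 1 - k) (by omega)
    have hinv := inv_congr_neg_inv_of_add_eq (p := p) (i := k + 1) (k := 2 * n - 1 - k + 1)
      k.succ_pos (by omega) (by omega)
    have hsign : (-1 : ℚ) ^ (2 * n - 1 - k + 1) = (-1) ^ k := by
      rw [neg_one_pow_congr]
      grind
    have hk_inv : -((k + 1 : ℕ) : ℚ)⁻¹ ∈ ℤ_(p) := by
      simpa using natCast_add_one_zpow_mem_integer (p := p) (k := k) (by omega) (-1)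
    have hprod := hsum.mul (powerSum_mem_integer (by omega) m) hk_inv hinv
    refine (hprod.const_mul (pow_mem (neg_mem (one_mem _)) k)).of_sub_eq ?_
    rw [hsign, powerSum_succ]
    push_cast
    ring
  have halt :
      ∑ k ∈ range (2 * n), -((-1) ^ (k + 1) * (powerSum m k + ((k : ℚ) + 1) ^ m) / (k + 1)) =
        -nestedSum (-1) m (2 * n) - (2 ^ m * powerSum (m - 1) n - powerSum (m - 1) (2 * n)) := by
    have h2 : (2 : ℚ) ^ m = 2 * 2 ^ (m - 1) := by rw [← zpow_one_add₀ two_ne_zero]; ring_nf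
    rw [h2, ← sum_alternating_zpow, nestedSum, ← sum_neg_distrib, ← sum_sub_distrib]
    refine sum_congr rfl fun k _ => ?_
    rw [zpow_sub_one₀ (by positivity)]
    ring
  rw [halt] at hreflect
  refine (hreflect.add (powerSum_odd_congr_zero hp3 hn (hm.sub_odd odd_one))).of_sub_eq ?_
  ring

lemma nestedSum_neg_one_neg_two_congr (hp3 : 3 < p) (hn : p = 2 * n + 1) :
    ratCongr p 1 (nestedSum (-1) (-2) (2 * n)) (bernoulli (p - 3) / 4) := by
  have h12 : (1 / 2 : ℚ) ∈ ℤ_(p) := div_two_mem_integer hp3 (one_mem _)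
  have h18 : (-(1 / 8) : ℚ) ∈ ℤ_(p) := mem_integer_of_den_dvd_six_pow hp3 3 (by norm_num)
  have h := (two_mul_nestedSum_neg_one_congr hp3 hn (m := -2) (by decide)
    (powerSum_neg_two_congr_zero hp3 hn)).const_mul h12
  exact (h.add ((powerSum_neg_three_half_congr hp3 hn).const_mul h18)).of_sub_eq
    (by norm_num; ring)

lemma prodOneSubDiv_two_mul_congr (hp3 : 3 < p) (hn : p = 2 * n + 1) :
    ratCongr p 4 (prodOneSubDiv (2 * p) (2 * n)) (1 - 2 / 3 * p ^ 3 * bernoulli (p - 3)) := by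
  have h23 : (2 / 3 : ℚ) ∈ ℤ_(p) := mem_integer_of_den_dvd_six_pow hp3 1 (by norm_num)
  have h83 : (8 / 3 : ℚ) ∈ ℤ_(p) := mem_integer_of_den_dvd_six_pow hp3 1 (by norm_num)
  have h2p : ratCongr p 1 (2 * p) 0 :=
    (ratCongr.natCast_self.const_mul (ofNat_mem _ 2)).of_sub_eq (by ring)
  have h1 := (ratCongr.pow_mul_iff (s := 1)).2 (powerSum_neg_one_congr hp3 hn)
  have h2 := (ratCongr.pow_mul_iff (s := 2)).2 (powerSum_neg_two_congr hp3 hn)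
  have h3 := (ratCongr.pow_mul_iff (s := 3)).2
    (powerSum_odd_congr_zero hp3 hn (m := -3) (by decide))
  have hmod_cube : ratCongr p 3 (prodOneSubDiv (2 * p) (2 * n)) 1 := by
    have hD := (ratCongr.pow_mul_iff (s := 2)).2 (nestedSum_one_neg_one_congr hp3 hn)
    have hsmall : ratCongr p 3 (p ^ 3 * (-(2 / 3) * bernoulli (p - 3))) 0 :=
      ratCongr.pow_mul_zero (mul_mem (neg_mem h23) (bernoulli_sub_three_mem_integer hp3))
    exact ((((prodOneSubDiv_congr h2p (k := 2 * n) (by omega)).sub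
      ((h1.mono (by norm_num)).const_mul (ofNat_mem _ 2))).add
        ((hD.mono (by norm_num)).const_mul (ofNat_mem _ 4))).add hsmall).of_sub_eq (by ring)
  have hlog := (truncLog_congr_sub_one hp3 hmod_cube).symm.trans
    (truncLog_prodOneSubDiv_congr hp3 h2p (k := 2 * n) (by omega))
  exact (((hlog.sub (h1.const_mul (ofNat_mem _ 2))).sub (h2.const_mul (ofNat_mem _ 2))).sub
    (h3.const_mul h83)).of_sub_eq (by ring)

lemma sum_prodOneSubDiv_div_congr {t : ℚ} (ht : ratCongr p 1 t 0) (hN : N < p) :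
    ratCongr p 3 (∑ k ∈ range N, (-1) ^ k * prodOneSubDiv t k / (k + 1))
      (t * nestedSum (-1) (-1) N - ∑ k ∈ range N, (-1) ^ (k + 1) * ((k : ℚ) + 1) ^ (-1 : ℤ) -
        t ^ 2 * ∑ k ∈ range N, (-1) ^ (k + 1) * nestedSum 1 (-1) k / (k + 1)) := by
  rw [nestedSum, mul_sum, mul_sum, ← sum_sub_distrib, ← sum_sub_distrib]
  refine ratCongr.sum fun k hk => ?_
  have hk := mem_range.1 hk
  refine ((prodOneSubDiv_congr ht (k := k) (by omega)).const_mul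
    (div_natCast_add_one_mem_integer (k := k) (pow_mem (neg_mem (one_mem _)) k)
      (by omega))).of_sub_eq ?_
  rw [zpow_neg_one]
  ring

lemma sum_prodOneSubDiv_prime_div (hn : p = 2 * n + 1) :
    ∑ k ∈ range (2 * n), (-1) ^ k * prodOneSubDiv p k / ((k : ℚ) + 1) = 2 * fermatQ p := by
  have hp0 : (p : ℚ) ≠ 0 := mod_cast hp.out.ne_zero
  have hpn : ((2 * n : ℕ) + 1 : ℚ) = p := by rw [hn]; push_cast; rfl
  have h := sum_choose_succ (2 * n) (2 * n)
  have hpow := two_pow_eq_one_add_mul_fermatQ (p := p)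
  rw [show p - 1 = 2 * n by omega] at hpow
  rw [sum_choose_succ_self, hpn, hpow] at h
  exact mul_left_cancel₀ hp0 (by linear_combination -h)

lemma sum_prodOneSubDiv_two_mul_prime_div_congr (hp3 : 3 < p) (hn : p = 2 * n + 1) :
    ratCongr p 3 (∑ k ∈ range (2 * n), (-1) ^ k * prodOneSubDiv (2 * p) k / ((k : ℚ) + 1))
      (2 * fermatQ p + p * fermatQ p ^ 2 + 1 / 3 * p ^ 2 * bernoulli (p - 3)) := by
  have hpn : ((2 * (2 * n) + 1 : ℕ) + 1 : ℚ) = 2 * p := by rw [hn]; push_cast; ring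
  have h := sum_choose_succ (2 * (2 * n) + 1) (2 * n)
  have hpow := two_pow_eq_one_add_mul_fermatQ (p := p)
  rw [show p - 1 = 2 * n by omega] at hpow
  have hfour : (4 : ℚ) ^ (2 * n) = (1 + p * fermatQ p) ^ 2 := by
    rw [← hpow, ← pow_mul, mul_comm (2 * n) 2, pow_mul 2 2]
    norm_num
  rw [sum_choose_succ_two_mul, natCast_choose_eq_prodOneSubDiv, hpn, hfour, pow_mul, neg_one_sq,
    one_pow, one_mul] at h
  have h12 : (-(1 / 2) : ℚ) ∈ ℤ_(p) := neg_mem (div_two_mem_integer hp3 (one_mem _))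
  refine (ratCongr.pow_mul_iff (s := 1)).1
    (((prodOneSubDiv_two_mul_congr hp3 hn).const_mul h12).of_sub_eq ?_)
  linear_combination -1 / 2 * h

lemma nestedSum_neg_one_neg_one_congr (hp3 : 3 < p) (hn : p = 2 * n + 1) :
    ratCongr p 2 (nestedSum (-1) (-1) (2 * n))
      (fermatQ p ^ 2 - p * fermatQ p ^ 3 - 13 / 24 * p * bernoulli (p - 3)) := by
  have h2p : ratCongr p 1 (2 * p) 0 :=
    (ratCongr.natCast_self.const_mul (ofNat_mem _ 2)).of_sub_eq (by ring)
  have hsum := sum_prodOneSubDiv_div_congr (p := p) ratCongr.natCast_self (N := 2 * n) (by omega)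
  have hsum_two := sum_prodOneSubDiv_div_congr h2p (N := 2 * n) (by omega)
  rw [sum_prodOneSubDiv_prime_div hn, sum_alternating_zpow] at hsum
  rw [sum_alternating_zpow] at hsum_two
  have htwo := hsum_two.symm.trans (sum_prodOneSubDiv_two_mul_prime_div_congr hp3 hn)
  have h12 : (1 / 2 : ℚ) ∈ ℤ_(p) := div_two_mem_integer hp3 (one_mem _)
  have hL := ((powerSum_neg_one_congr hp3 hn).sub (powerSum_neg_one_half_congr hp3 hn)).const_mul
    (ofNat_mem _ 3)
  refine (ratCongr.pow_mul_iff (s := 1)).1 (((((hsum.symm.const_mul (ofNat_mem _ 4)).sub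
    htwo).sub hL).const_mul h12).of_sub_eq ?_)
  rw [zpow_neg_one]
  ring

lemma sum_powerSum_reflect_div_congr (hn : p = 2 * n + 1) (m : ℤ) :
    ratCongr p 2 (∑ k ∈ range n, powerSum m (2 * n - 2 * k) / (k + 1))
      (powerSum m (2 * n) * powerSum (-1) n -
        (-1) ^ m * (∑ k ∈ range n, powerSum m (2 * k) / (k + 1) -
          m * p * ∑ k ∈ range n, powerSum (m - 1) (2 * k) / (k + 1))) := by
  have hharmonic : powerSum (-1) n = ∑ k ∈ range n, ((k : ℚ) + 1) ^ (-1 : ℤ) := rfl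
  rw [hharmonic, mul_sum, mul_sum, ← sum_sub_distrib, mul_sum, ← sum_sub_distrib]
  refine ratCongr.sum fun k hk => ?_
  have hk := mem_range.1 hk
  refine ((powerSum_reflect hn m (j := 2 * k) (k := 2 * n - 2 * k) (by omega)).const_mul
    (natCast_add_one_zpow_mem_integer (k := k) (by omega) (-1))).of_sub_eq ?_
  rw [zpow_neg_one]
  ring

lemma powerSum_neg_one_half_congr_mod_sq (hp3 : 3 < p) (hn : p = 2 * n + 1) :
    ratCongr p 2 (powerSum (-1) n) (-2 * fermatQ p + p * fermatQ p ^ 2) := by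
  have h23 : (2 / 3 : ℚ) ∈ ℤ_(p) := mem_integer_of_den_dvd_six_pow hp3 1 (by norm_num)
  have h712 : (7 / 12 : ℚ) ∈ ℤ_(p) := mem_integer_of_den_dvd_six_pow hp3 2 (by norm_num)
  have hsmall : ratCongr p 2
      (p ^ 2 * (2 / 3 * fermatQ p ^ 3 + 7 / 12 * bernoulli (p - 3))) 0 :=
    ratCongr.pow_mul_zero (add_mem (mul_mem h23 (pow_mem (fermatQ_mem_integer hp3) 3))
      (mul_mem h712 (bernoulli_sub_three_mem_integer hp3)))
  exact (((powerSum_neg_one_half_congr hp3 hn).mono (by norm_num)).sub hsmall).of_sub_eq (by ring)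

lemma sum_powerSum_neg_one_even_index_congr (hp3 : 3 < p) (hn : p = 2 * n + 1) :
    ratCongr p 2 (∑ k ∈ range n, powerSum (-1) (2 * k) / (k + 1))
      (fermatQ p ^ 2 - 4 * fermatQ p + 2 * p * fermatQ p ^ 2 - p * fermatQ p ^ 3 -
        7 / 8 * p * bernoulli (p - 3)) := by
  rw [sum_powerSum_even_index, sum_odd_zpow_neg_one_div]
  have hodd := ((powerSum_neg_one_congr_zero hp3 hn).sub
    (powerSum_neg_one_half_congr_mod_sq hp3 hn)).const_mul (ofNat_mem _ 2)
  refine (((nestedSum_one_neg_one_congr hp3 hn).add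
    (nestedSum_neg_one_neg_one_congr hp3 hn)).sub hodd).of_sub_eq ?_
  ring

lemma sum_powerSum_neg_two_even_index_congr (hp3 : 3 < p) (hn : p = 2 * n + 1) :
    ratCongr p 1 (∑ k ∈ range n, powerSum (-2) (2 * k) / (k + 1))
      (4 * fermatQ p - 3 / 4 * bernoulli (p - 3)) := by
  rw [sum_powerSum_even_index, sum_odd_zpow_neg_two_div]
  have h12 : (1 / 2 : ℚ) ∈ ℤ_(p) := div_two_mem_integer hp3 (one_mem _)
  have hfermat : ratCongr p 1 (powerSum (-1) n) (-2 * fermatQ p) :=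
    ((powerSum_neg_one_half_congr_mod_sq hp3 hn).mono one_le_two).trans
      ((ratCongr.pow_mul_zero (pow_mem (fermatQ_mem_integer hp3) 2)).of_sub_eq (by ring))
  have hodd := ((((powerSum_neg_two_congr_zero hp3 hn).sub
    ((powerSum_neg_one_congr_zero hp3 hn).mono one_le_two)).add hfermat).const_mul
      (ofNat_mem _ 2)).sub ((powerSum_neg_two_half_congr_zero hp3 hn).const_mul h12)
  refine (((nestedSum_one_neg_two_congr hp3 hn).add
    (nestedSum_neg_one_neg_two_congr hp3 hn)).sub hodd).of_sub_eq ?_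
  ring

end NestedSums

theorem sum_H_p_add_one_sub_2k_div_k (p : ℕ) (hp : p.Prime) (hp3 : 3 < p) :
    ratCongr p 2
      (∑ k ∈ Finset.Icc 1 ((p - 1) / 2), harmonic (p + 1 - 2 * k) / k)
      (fermatQ p ^ 2 - 4 * fermatQ p + 4 * p * fermatQ p + 2 * p * fermatQ p ^ 2 -
        p * fermatQ p ^ 3 - (13 / 8) * p * bernoulli (p - 3)) := by
  have := Fact.mk hp
  obtain ⟨n, hn⟩ := hp.odd_of_ne_two (by omega)
  have hprod : ratCongr p 2 (powerSum (-1) (2 * n) * powerSum (-1) n) 0 :=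
    ((powerSum_neg_one_congr_zero hp3 hn).const_mul
      (powerSum_mem_integer (N := n) (by omega) (-1))).of_sub_eq (by ring)
  have hreflect := sum_powerSum_reflect_div_congr hn (-1)
  have hmain := sum_powerSum_neg_one_even_index_congr hp3 hn
  have hcorrection :=
    (ratCongr.pow_mul_iff (s := 1)).2 (sum_powerSum_neg_two_even_index_congr hp3 hn)
  rw [sum_harmonic_sub_two_mul_div hn]
  exact (((hreflect.add hprod).add hmain).add hcorrection).of_sub_eq (by norm_num; ring)
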